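/- Let σ0 > 0, a < b real numbers, n ≥ 1 an integer, φ0 = γ_{0,σ0}, and let λ_n be the unique minimizer over λ ∈ [a,b] of ∫_a^b |t − λ|^n φ0(t) dt. Set C := min_{t∈[a,b]} φ0(t), D := max_{t∈[a,b]} φ0(t) and S := D/C. Then (S^{1/n}·a + b)/(1 + S^{1/n}) ≤ λ_n ≤ (a + S^{1/n}·b)/(1 + S^{1/n}). -/

import Mathlib

/-!
The argument compares `lam` with nearby candidates `μ`, without differentiating under the
integral sign. For `n ≥ 1` one has `|t - μ| ^ n = (t - μ)₊ ^ n + (μ - t)₊ ^ n`, so for `μ ≤ l`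

`|t - μ| ^ n - |t - l| ^ n = ((t - μ)₊ ^ n - (t - l)₊ ^ n) - ((l - t)₊ ^ n - (μ - t)₊ ^ n)`

with both brackets nonnegative. If the weight takes values in `[C, D]`, replacing it by `D` on the
first bracket and by `C` on the second gives an upper bound whose integral is explicit
(`integral_posPart_pow`, `integral_negPart_pow`). Minimality of `l` then yields

`C * ((l - a) ^ (n + 1) - (μ - a) ^ (n + 1)) ≤ D * ((b - μ) ^ (n + 1) - (b - l) ^ (n + 1))`,

and dividing by `l - μ` and letting `μ → l` from below gives `C * (l - a) ^ n ≤ D * (b - l) ^ n`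
(`weighted_pow_le`). Taking `n`-th roots is the upper bound for `lam`; the lower bound is the
same statement applied to the reflected problem on `[-b, -a]`, the Gaussian weight being even.
-/

open MeasureTheory

/-- Centered Gaussian pdf of standard deviation σ. -/
noncomputable def gaussPdf (σ t : ℝ) : ℝ :=
  (2 * Real.pi * σ ^ 2) ^ (-(1:ℝ) / 2) * Real.exp (-(t ^ 2) / (2 * σ ^ 2))

lemma integral_posPart_pow {a b c : ℝ} {n : ℕ} (hn : 1 ≤ n) (hac : a ≤ c) (hcb : c ≤ b) :
    ∫ t in a..b, (max (t - c) 0) ^ n = (b - c) ^ (n + 1) / (n + 1) := by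
  have hcont : Continuous fun t : ℝ => (max (t - c) 0) ^ n := by fun_prop
  rw [← intervalIntegral.integral_add_adjacent_intervals
    (hcont.intervalIntegrable a c) (hcont.intervalIntegrable c b)]
  have h1 : ∫ t in a..c, (max (t - c) 0) ^ n = ∫ t in a..c, (0 : ℝ) := by
    apply intervalIntegral.integral_congr
    intro t ht
    rw [Set.uIcc_of_le hac] at ht
    simp only
    rw [max_eq_right (by linarith [ht.2]), zero_pow (by omega)]
  have h2 : ∫ t in c..b, (max (t - c) 0) ^ n = ∫ t in c..b, (t - c) ^ n := by
    apply intervalIntegral.integral_congr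
    intro t ht
    rw [Set.uIcc_of_le hcb] at ht
    simp only
    rw [max_eq_left (by linarith [ht.1])]
  rw [h1, h2, intervalIntegral.integral_comp_sub_right (fun x => x ^ n) c, integral_pow]
  simp

lemma integral_negPart_pow {a b c : ℝ} {n : ℕ} (hn : 1 ≤ n) (hac : a ≤ c) (hcb : c ≤ b) :
    ∫ t in a..b, (max (c - t) 0) ^ n = (c - a) ^ (n + 1) / (n + 1) := by
  have h := integral_posPart_pow (a := -b) (b := -a) (c := -c) hn (by linarith) (by linarith)
  rw [← intervalIntegral.integral_comp_neg (fun t => (max (t - -c) 0) ^ n)] at h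
  have e : ∀ t : ℝ, -t - -c = c - t := fun t => by ring
  have e' : -a - -c = c - a := by ring
  simpa only [e, e'] using h

lemma abs_pow_eq_posPart_add {n : ℕ} (hn : 1 ≤ n) (t c : ℝ) :
    |t - c| ^ n = (max (t - c) 0) ^ n + (max (c - t) 0) ^ n := by
  rcases le_total t c with h | h
  · rw [abs_of_nonpos (by linarith), max_eq_right (by linarith : t - c ≤ 0),
      max_eq_left (by linarith : 0 ≤ c - t), zero_pow (by omega), zero_add, neg_sub]
  · rw [abs_of_nonneg (by linarith), max_eq_left (by linarith : 0 ≤ t - c),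
      max_eq_right (by linarith : c - t ≤ 0), zero_pow (by omega), add_zero]

lemma pow_succ_sub_le {x y : ℝ} (hy : 0 ≤ y) (hxy : y ≤ x) (n : ℕ) :
    x ^ (n + 1) - y ^ (n + 1) ≤ (n + 1) * x ^ n * (x - y) := by
  induction n with
  | zero => simp
  | succ k ih =>
    have h1 := mul_le_mul_of_nonneg_left ih (hy.trans hxy)
    have h2 : y ^ (k + 1) * (x - y) ≤ x ^ (k + 1) * (x - y) :=
      mul_le_mul_of_nonneg_right (pow_le_pow_left₀ hy hxy _) (by linarith)
    have e : x ^ (k + 1 + 1) - y ^ (k + 1 + 1)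
        = x * (x ^ (k + 1) - y ^ (k + 1)) + y ^ (k + 1) * (x - y) := by ring
    rw [e]
    push_cast
    calc _ ≤ x * ((k + 1) * x ^ k * (x - y)) + x ^ (k + 1) * (x - y) := add_le_add h1 h2
      _ = _ := by ring

lemma le_pow_succ_sub {x y : ℝ} (hy : 0 ≤ y) (hxy : y ≤ x) (n : ℕ) :
    (n + 1) * y ^ n * (x - y) ≤ x ^ (n + 1) - y ^ (n + 1) := by
  induction n with
  | zero => simp
  | succ k ih =>
    have h1 := mul_le_mul_of_nonneg_left ih hy
    have h2 : y ^ (k + 1) * (x - y) ≤ x ^ (k + 1) * (x - y) :=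
      mul_le_mul_of_nonneg_right (pow_le_pow_left₀ hy hxy _) (by linarith)
    have e : x ^ (k + 1 + 1) - y ^ (k + 1 + 1)
        = y * (x ^ (k + 1) - y ^ (k + 1)) + x ^ (k + 1) * (x - y) := by ring
    rw [e]
    push_cast
    calc _ = y * ((k + 1) * y ^ k * (x - y)) + y ^ (k + 1) * (x - y) := by ring
      _ ≤ _ := add_le_add h1 h2

/-- Comparison of the minimizer `l` with a candidate `μ` to its left, the weight being replaced by
its extreme values. -/
lemma weighted_pow_succ_le {φ : ℝ → ℝ} (hφ : Continuous φ) {a b C D : ℝ}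
    (hCφ : ∀ t ∈ Set.Icc a b, C ≤ φ t) (hφD : ∀ t ∈ Set.Icc a b, φ t ≤ D)
    {n : ℕ} (hn : 1 ≤ n) {l μ : ℝ} (haμ : a ≤ μ) (hμl : μ ≤ l) (hlb : l ≤ b)
    (hopt : ∫ t in a..b, |t - l| ^ n * φ t ≤ ∫ t in a..b, |t - μ| ^ n * φ t) :
    C * ((l - a) ^ (n + 1) - (μ - a) ^ (n + 1))
      ≤ D * ((b - μ) ^ (n + 1) - (b - l) ^ (n + 1)) := by
  have hab : a ≤ b := by linarith
  have ii : ∀ f : ℝ → ℝ, Continuous f → IntervalIntegrable f volume a b :=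
    fun f hf => hf.intervalIntegrable a b
  have hle : ∫ t in a..b, (|t - μ| ^ n * φ t - |t - l| ^ n * φ t) ≤
      ∫ t in a..b, (D * ((max (t - μ) 0) ^ n - (max (t - l) 0) ^ n)
        - C * ((max (l - t) 0) ^ n - (max (μ - t) 0) ^ n)) := by
    apply intervalIntegral.integral_mono_on hab (ii _ (by fun_prop)) (ii _ (by fun_prop))
    intro t ht
    rw [abs_pow_eq_posPart_add hn, abs_pow_eq_posPart_add hn]
    have p1 : (max (t - l) 0) ^ n ≤ (max (t - μ) 0) ^ n :=
      pow_le_pow_left₀ (le_max_right _ _) (max_le_max (by linarith) le_rfl) _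
    have p2 : (max (μ - t) 0) ^ n ≤ (max (l - t) 0) ^ n :=
      pow_le_pow_left₀ (le_max_right _ _) (max_le_max (by linarith) le_rfl) _
    have q1 := mul_le_mul_of_nonneg_right (hφD t ht) (sub_nonneg.2 p1)
    have q2 := mul_le_mul_of_nonneg_right (hCφ t ht) (sub_nonneg.2 p2)
    linarith
  rw [intervalIntegral.integral_sub (ii _ (by fun_prop)) (ii _ (by fun_prop)),
    intervalIntegral.integral_sub (ii _ (by fun_prop)) (ii _ (by fun_prop)),
    intervalIntegral.integral_const_mul, intervalIntegral.integral_const_mul,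
    intervalIntegral.integral_sub (ii _ (by fun_prop)) (ii _ (by fun_prop)),
    intervalIntegral.integral_sub (ii _ (by fun_prop)) (ii _ (by fun_prop)),
    integral_posPart_pow hn haμ (hμl.trans hlb), integral_posPart_pow hn (haμ.trans hμl) hlb,
    integral_negPart_pow hn haμ (hμl.trans hlb), integral_negPart_pow hn (haμ.trans hμl) hlb] at hle
  have hn1 : (0 : ℝ) < n + 1 := by positivity
  have h0 := (sub_nonneg.2 hopt).trans hle
  rw [← sub_div, ← sub_div, ← mul_div_assoc, ← mul_div_assoc, sub_nonneg,
    div_le_div_iff_of_pos_right hn1] at h0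
  exact h0

/-- One-sided first-order condition for a minimizer of the weighted `n`-th power deviation. -/
lemma weighted_pow_le {φ : ℝ → ℝ} (hφ : Continuous φ) {a b C D : ℝ} (hC : 0 ≤ C) (hD : 0 ≤ D)
    (hCφ : ∀ t ∈ Set.Icc a b, C ≤ φ t) (hφD : ∀ t ∈ Set.Icc a b, φ t ≤ D)
    {n : ℕ} (hn : 1 ≤ n) {l : ℝ} (hl : l ∈ Set.Icc a b)
    (hopt : ∀ μ ∈ Set.Icc a b,
      ∫ t in a..b, |t - l| ^ n * φ t ≤ ∫ t in a..b, |t - μ| ^ n * φ t) :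
    C * (l - a) ^ n ≤ D * (b - l) ^ n := by
  rcases hl.1.eq_or_lt with rfl | hal
  · rw [sub_self, zero_pow (by omega), mul_zero]
    exact mul_nonneg hD (pow_nonneg (sub_nonneg.2 hl.2) _)
  have key : ∀ μ ∈ Set.Ioo a l, C * (μ - a) ^ n ≤ D * (b - μ) ^ n := by
    intro μ hμ
    have h := weighted_pow_succ_le hφ hCφ hφD hn hμ.1.le hμ.2.le hl.2
      (hopt μ ⟨hμ.1.le, hμ.2.le.trans hl.2⟩)
    have h1 := mul_le_mul_of_nonneg_left
      (le_pow_succ_sub (x := l - a) (y := μ - a) (by linarith [hμ.1]) (by linarith [hμ.2]) n) hC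
    have h2 := mul_le_mul_of_nonneg_left
      (pow_succ_sub_le (x := b - μ) (y := b - l) (by linarith [hl.2]) (by linarith [hμ.2]) n) hD
    have hpos : 0 < ((n : ℝ) + 1) * (l - μ) := mul_pos (by positivity) (by linarith [hμ.2])
    refine le_of_mul_le_mul_right ?_ hpos
    calc C * (μ - a) ^ n * (((n : ℝ) + 1) * (l - μ))
        = C * ((n + 1) * (μ - a) ^ n * (l - a - (μ - a))) := by ring
      _ ≤ D * ((n + 1) * (b - μ) ^ n * (b - μ - (b - l))) := h1.trans (h.trans h2)
      _ = _ := by ring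
  have hclosed : IsClosed {μ : ℝ | C * (μ - a) ^ n ≤ D * (b - μ) ^ n} :=
    isClosed_le (by fun_prop) (by fun_prop)
  have hsub := hclosed.closure_subset_iff.2 (show Set.Ioo a l ⊆ _ from key)
  rw [closure_Ioo hal.ne] at hsub
  exact hsub (Set.right_mem_Icc.2 hal.le)

lemma le_rpow_mul_of_mul_pow_le {C D x y : ℝ} {n : ℕ} (hn : 1 ≤ n) (hC : 0 < C) (hD : 0 ≤ D)
    (hy : 0 ≤ y) (h : C * x ^ n ≤ D * y ^ n) : x ≤ (D / C) ^ ((1 : ℝ) / n) * y := by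
  have hS : 0 ≤ D / C := div_nonneg hD hC.le
  refine le_of_pow_le_pow_left₀ (n := n) (by omega)
    (mul_nonneg (Real.rpow_nonneg hS _) hy) ?_
  rw [mul_pow, one_div, Real.rpow_inv_natCast_pow hS (by omega), div_mul_eq_mul_div,
    le_div_iff₀ hC]
  linarith

lemma continuous_gaussPdf (σ : ℝ) : Continuous (gaussPdf σ) := by
  unfold gaussPdf
  fun_prop

lemma gaussPdf_pos {σ : ℝ} (hσ : 0 < σ) (t : ℝ) : 0 < gaussPdf σ t := by
  unfold gaussPdf
  have := Real.pi_pos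
  positivity

lemma gaussPdf_neg (σ t : ℝ) : gaussPdf σ (-t) = gaussPdf σ t := by
  simp [gaussPdf]

theorem p_optimal_level_localization
    (σ0 : ℝ) (hσ0 : 0 < σ0) (a b : ℝ) (hab : a < b) (n : ℕ) (hn : 1 ≤ n)
    (C D S : ℝ)
    (hC : C = sInf (gaussPdf σ0 '' Set.Icc a b))
    (hD : D = sSup (gaussPdf σ0 '' Set.Icc a b))
    (hS : S = D / C)
    (lam : ℝ) (hmem : lam ∈ Set.Icc a b)
    (hopt : ∀ lam' ∈ Set.Icc a b,
      ∫ t in Set.Icc a b, |t - lam| ^ n * gaussPdf σ0 t ≤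
        ∫ t in Set.Icc a b, |t - lam'| ^ n * gaussPdf σ0 t) :
    (S ^ ((1:ℝ) / n) * a + b) / (1 + S ^ ((1:ℝ) / n)) ≤ lam ∧
      lam ≤ (a + S ^ ((1:ℝ) / n) * b) / (1 + S ^ ((1:ℝ) / n)) := by
  have hcont := continuous_gaussPdf σ0
  have hcomp : IsCompact (gaussPdf σ0 '' Set.Icc a b) := isCompact_Icc.image hcont
  have hne : (gaussPdf σ0 '' Set.Icc a b).Nonempty := (Set.nonempty_Icc.2 hab.le).image _
  have hCφ : ∀ t ∈ Set.Icc a b, C ≤ gaussPdf σ0 t := fun t ht => by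
    rw [hC]
    exact csInf_le hcomp.bddBelow (Set.mem_image_of_mem _ ht)
  have hφD : ∀ t ∈ Set.Icc a b, gaussPdf σ0 t ≤ D := fun t ht => by
    rw [hD]
    exact le_csSup hcomp.bddAbove (Set.mem_image_of_mem _ ht)
  have hCpos : 0 < C := by
    obtain ⟨t, -, ht⟩ := hcomp.sInf_mem hne
    rw [hC, ← ht]
    exact gaussPdf_pos hσ0 t
  have hDpos : 0 < D := (gaussPdf_pos hσ0 lam).trans_le (hφD lam hmem)
  simp only [integral_Icc_eq_integral_Ioc, ← intervalIntegral.integral_of_le hab.le] at hopt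
  have up := weighted_pow_le hcont hCpos.le hDpos.le hCφ hφD hn hmem hopt
  have refl_int : ∀ μ : ℝ, ∫ t in (-b)..(-a), |t - μ| ^ n * gaussPdf σ0 t
      = ∫ t in a..b, |t - -μ| ^ n * gaussPdf σ0 t := fun μ => by
    rw [← intervalIntegral.integral_comp_neg (fun t => |t - μ| ^ n * gaussPdf σ0 t)]
    congr 1
    ext t
    rw [gaussPdf_neg, ← abs_neg (-t - μ)]
    congr 3
    ring
  have neg_mem : ∀ t ∈ Set.Icc (-b) (-a), -t ∈ Set.Icc a b := fun t ht =>
    ⟨by linarith [ht.2], by linarith [ht.1]⟩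
  have low := weighted_pow_le (a := -b) (b := -a) (l := -lam) hcont hCpos.le hDpos.le
    (fun t ht => gaussPdf_neg σ0 t ▸ hCφ (-t) (neg_mem t ht))
    (fun t ht => gaussPdf_neg σ0 t ▸ hφD (-t) (neg_mem t ht)) hn
    ⟨by linarith [hmem.2], by linarith [hmem.1]⟩
    (fun μ hμ => by
      rw [refl_int, refl_int, neg_neg]
      exact hopt _ (neg_mem μ hμ))
  have up' := le_rpow_mul_of_mul_pow_le hn hCpos hDpos.le (sub_nonneg.2 hmem.2) up
  have low' := le_rpow_mul_of_mul_pow_le hn hCpos hDpos.le (by linarith [hmem.1]) low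
  rw [← hS] at up' low'
  have hden : 0 < 1 + S ^ ((1:ℝ) / n) := by
    have : 0 ≤ S := hS ▸ (div_pos hDpos hCpos).le
    positivity
  constructor
  · rw [div_le_iff₀ hden]
    linarith
  · rw [le_div_iff₀ hden]
    linarith
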